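/- Let m ≥ 1, let ρ > 0, and let M ⊆ Δ_ρ be nonempty. If two sets H_0, H_1 ⊆ Δ_ρ satisfy ∂^0_ρ M ⊆ H_0 ⊆ M and ∂^1_ρ M ⊆ H_1 ⊆ M^c ∩ Δ_ρ, then ∂^0_ρ M = {x ∈ H_0 : dist(x, H_1) = ρ} and ∂^1_ρ M = {z ∈ H_1 : dist(z, H_0) = ρ}. -/

import Mathlib

noncomputable section

/-- The grid `Δ_ρ = ρℤ^m` in `ℝ^m` (with the maximum norm). -/
def grid (m : ℕ) (ρ : ℝ) : Set (Fin m → ℝ) := {x | ∀ j, ∃ k : ℤ, x j = ρ * k}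

/-- `∂⁰_ρ M`: points of `M` having a grid neighbour in the complement at distance `ρ`. -/
def bdry0 (m : ℕ) (ρ : ℝ) (M : Set (Fin m → ℝ)) : Set (Fin m → ℝ) :=
  {x | x ∈ M ∧ ∃ z ∈ Mᶜ ∩ grid m ρ, dist x z = ρ}

/-- `∂¹_ρ M`: grid points of the complement at distance `ρ` from `∂⁰_ρ M`. -/
def bdry1 (m : ℕ) (ρ : ℝ) (M : Set (Fin m → ℝ)) : Set (Fin m → ℝ) :=
  {z | z ∈ Mᶜ ∩ grid m ρ ∧ Metric.infDist z (bdry0 m ρ M) = ρ}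

theorem grid_le_dist {m : ℕ} {ρ : ℝ} (hρ : 0 < ρ) {x z : Fin m → ℝ}
    (hx : x ∈ grid m ρ) (hz : z ∈ grid m ρ) (hxz : x ≠ z) : ρ ≤ dist x z := by
  obtain ⟨j, hj⟩ := Function.ne_iff.mp hxz
  obtain ⟨k, hk⟩ := hx j
  obtain ⟨l, hl⟩ := hz j
  refine le_trans ?_ (dist_le_pi_dist x z j)
  rw [Real.dist_eq, hk, hl, ← mul_sub, abs_mul, abs_of_pos hρ]
  have hkl : k - l ≠ 0 := by
    intro h
    apply hj
    rw [hk, hl, sub_eq_zero.mp h]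
  have h1 : (1 : ℝ) ≤ |(k : ℝ) - l| := by exact_mod_cast Int.one_le_abs hkl
  nlinarith

theorem grid_dist_le {m : ℕ} {ρ : ℝ} (hρ : 0 < ρ) {x z : Fin m → ℝ}
    (hx : x ∈ grid m ρ) (hz : z ∈ grid m ρ) (h : dist x z < 2 * ρ) : dist x z ≤ ρ := by
  rw [dist_pi_le_iff hρ.le]
  intro j
  have h2 := lt_of_le_of_lt (dist_le_pi_dist x z j) h
  obtain ⟨k, hk⟩ := hx j
  obtain ⟨l, hl⟩ := hz j
  rw [Real.dist_eq, hk, hl, ← mul_sub, abs_mul, abs_of_pos hρ] at h2 ⊢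
  have h3 : |(k : ℝ) - l| < 2 := by nlinarith
  have h4 : |k - l| < 2 := by exact_mod_cast h3
  have h5 : |k - l| ≤ 1 := by omega
  have h6 : |(k : ℝ) - l| ≤ 1 := by exact_mod_cast h5
  nlinarith

theorem grid_infDist_iff {m : ℕ} {ρ : ℝ} (hρ : 0 < ρ) {x : Fin m → ℝ} {A : Set (Fin m → ℝ)}
    (hx : x ∈ grid m ρ) (hA : A ⊆ grid m ρ) (hxA : x ∉ A) :
    Metric.infDist x A = ρ ↔ ∃ a ∈ A, dist x a = ρ := by
  have hne : ∀ a ∈ A, x ≠ a := fun a ha h => hxA (h ▸ ha)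
  constructor
  · intro h
    have hA0 : A.Nonempty := by
      rw [Set.nonempty_iff_ne_empty]
      rintro rfl
      rw [Metric.infDist_empty] at h
      linarith
    have h2 : Metric.infDist x A < 2 * ρ := by linarith
    obtain ⟨a, ha, hlt⟩ := (Metric.infDist_lt_iff hA0).mp h2
    exact ⟨a, ha, le_antisymm (grid_dist_le hρ hx (hA ha) hlt)
      (grid_le_dist hρ hx (hA ha) (hne a ha))⟩
  · rintro ⟨a, ha, h⟩
    apply le_antisymm
    · rw [← h]
      exact Metric.infDist_le_dist_of_mem ha
    · rw [Metric.le_infDist ⟨a, ha⟩]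
      exact fun {b} hb => grid_le_dist hρ hx (hA hb) (hne b hb)

theorem stmt7 (m : ℕ) (hm : 1 ≤ m) (ρ : ℝ) (hρ : 0 < ρ)
    (M : Set (Fin m → ℝ)) (hM : M ⊆ grid m ρ) (hne : M.Nonempty)
    (H0 H1 : Set (Fin m → ℝ)) (hH0g : H0 ⊆ grid m ρ) (hH1g : H1 ⊆ grid m ρ)
    (h00 : bdry0 m ρ M ⊆ H0) (h01 : H0 ⊆ M)
    (h10 : bdry1 m ρ M ⊆ H1) (h11 : H1 ⊆ Mᶜ ∩ grid m ρ) :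
    bdry0 m ρ M = {x | x ∈ H0 ∧ Metric.infDist x H1 = ρ} ∧
    bdry1 m ρ M = {z | z ∈ H1 ∧ Metric.infDist z H0 = ρ} := by
  have hB0 : bdry0 m ρ M ⊆ grid m ρ := fun x hx => hM hx.1
  have key : ∀ x ∈ M, ∀ z ∈ Mᶜ ∩ grid m ρ, dist x z = ρ → x ∈ bdry0 m ρ M ∧ z ∈ bdry1 m ρ M := by
    intro x hx z hz h
    have hx0 : x ∈ bdry0 m ρ M := ⟨hx, z, hz, h⟩
    exact ⟨hx0, hz, (grid_infDist_iff hρ hz.2 hB0 (fun h' => hz.1 h'.1)).mpr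
      ⟨x, hx0, by rw [dist_comm]; exact h⟩⟩
  constructor
  · ext x
    constructor
    · intro hx
      obtain ⟨hxM, z, hz, h⟩ := id hx
      exact ⟨h00 hx, (grid_infDist_iff hρ (hM hxM) hH1g (fun h' => (h11 h').1 hxM)).mpr
        ⟨z, h10 (key x hxM z hz h).2, h⟩⟩
    · rintro ⟨hx, h⟩
      have hxM := h01 hx
      obtain ⟨z, hz, h⟩ :=
        (grid_infDist_iff hρ (hM hxM) hH1g (fun h' => (h11 h').1 hxM)).mp h
      exact (key x hxM z (h11 hz) h).1
  · ext z
    constructor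
    · intro hz
      obtain ⟨hzM, h⟩ := id hz
      obtain ⟨x, hx, h⟩ := (grid_infDist_iff hρ hzM.2 hB0 (fun h' => hzM.1 h'.1)).mp h
      exact ⟨h10 hz, (grid_infDist_iff hρ hzM.2 hH0g (fun h' => hzM.1 (h01 h'))).mpr
        ⟨x, h00 hx, h⟩⟩
    · rintro ⟨hz, h⟩
      have hzM := h11 hz
      obtain ⟨x, hx, h⟩ := (grid_infDist_iff hρ hzM.2 hH0g (fun h' => hzM.1 (h01 h'))).mp h
      exact (key x (h01 hx) z hzM (by rw [dist_comm]; exact h)).2
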